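/- arXiv:2102.08651 — 2 statements merged into one kernel-verified Lean document; each statement's English description precedes it below -/
import Mathlib

section
/- Let L: ℝ → [0,∞) be a measurable function satisfying (L1) and (L2), with ∑_{k∈ℤ} L(u − t_k) = 1 for every u ∈ ℝ, and suppose M_p(L) := ∫_ℝ L(u)|u|^p du < +∞ for some 1 ≤ p < ∞. Let S*_w be the linear sampling Kantorovich operator (S*_w f)(x) := ∑_{k∈ℤ} L(wx − t_k) (w/Δ_k) ∫_{t_k/w}^{t_{k+1}/w} f(u) du. Then for every f ∈ Lip(α, p) with 0 < α ≤ 1 and every sufficiently large w > 0, ‖S*_w f − f‖_p ≤ δ^{−1/p} [2 m_{0,Π}(L)]^{(p−1)/p} [‖L‖₁ + M_p(L)]^{1/p} C₁ w^{−α} + δ^{−1/p} m_{0,Π}(L) C₁ Δ^{1/p} (Δ/w)^α, where m_{0,Π}(L) := sup_{u∈ℝ} ∑_{k∈ℤ} L(u − t_k) < +∞ and C₁ > 0 is the Lipschitz constant of f. -/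
/-!
Since the translated kernels sum to one, `m_{0,Π}(L) = 1` and the error `S*_w f x - f x` is the
`L (w x - t_k)`-weighted sum of the averages of `f u - f x` over the cells
`(t_k / w, t_{k+1} / w]`. Inserting `f (x + (u - t_k / w))` bounds it by `partA + partB`
(`enorm_SwLin_sub_le`), and Minkowski's inequality separates the two terms of the estimate.

* In `partA`, the increment is a shift by `x - t_k / w`. Jensen's inequality and the substitution
  `v = w x - t_k` bound the `p`-th power of its norm by `δ⁻¹ ∫ L(v) ‖f(· + v / w) - f‖_p^p dv`
  (`lintegral_partA_rpow_le`). The inequality `‖f(· + v / w) - f‖_p ≤ (1 + |v|) ω_p(f, 1 / w)`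
  (`eLpNorm_shift_le_one_add`) and `(1 + |v|)^p ≤ 2^(p-1) (1 + |v|^p)` produce the first term.
* In `partB`, the increment is a shift by `y = u - t_k / w ∈ (0, Δ / w]`, and the `p`-th power of
  the norm is at most `(w / δ) ∫_0^{Δ/w} ‖f(· + y) - f‖_p^p dy ≤ (Δ / δ) ω_p(f, Δ / w)^p`.

All estimates are carried out in `ℝ≥0∞`, where no integrability has to be tracked.
-/

open MeasureTheory Filter Real Set

noncomputable section

/-- Discrete absolute moment of order `β` (ENNReal-valued). -/
def dMoment (t : ℤ → ℝ) (L : ℝ → ℝ) (β : ℝ) : ENNReal :=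
  ⨆ u : ℝ, ∑' k : ℤ, ENNReal.ofReal (L (u - t k) * |u - t k| ^ β)

/-- `m_{0,Π}(L)` as a real number. -/
def m0R (t : ℤ → ℝ) (L : ℝ → ℝ) : ℝ :=
  (⨆ u : ℝ, ∑' k : ℤ, ENNReal.ofReal (L (u - t k))).toReal

/-- The `L^p`-norm `(∫ |g|^p)^{1/p}`. -/
def pNorm (p : ℝ) (g : ℝ → ℝ) : ℝ := (∫ x : ℝ, |g x| ^ p) ^ (1 / p)

/-- The `L^p`-modulus of smoothness of order one. -/
def omegaP (p : ℝ) (f : ℝ → ℝ) (d : ℝ) : ℝ :=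
  ⨆ s : {s : ℝ // |s| ≤ d}, pNorm p (fun x => f (x + (s : ℝ)) - f x)

/-- The linear sampling Kantorovich operator `S*_w`. -/
def SwLin (t : ℤ → ℝ) (L : ℝ → ℝ) (f : ℝ → ℝ) (w x : ℝ) : ℝ :=
  ∑' k : ℤ, L (w * x - t k) *
    ((w / (t (k + 1) - t k)) * ∫ u in (t k / w)..(t (k + 1) / w), f u)

open scoped ENNReal

/-! ### Jensen's inequality for the weighted cell averages -/

lemma lintegral_rpow_le_of_prob {α : Type*} [MeasurableSpace α] (μ : Measure α)
    [IsProbabilityMeasure μ] {p : ℝ} (hp : 1 ≤ p) {g : α → ℝ≥0∞} (hg : Measurable g) :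
    (∫⁻ a, g a ∂μ) ^ p ≤ ∫⁻ a, g a ^ p ∂μ := by
  have h := eLpNorm'_le_eLpNorm'_of_exponent_le one_pos hp μ (f := g)
    hg.aestronglyMeasurable
  simp only [eLpNorm', enorm_eq_self, ENNReal.rpow_one, div_one] at h
  have hp0 : 0 < p := by linarith
  calc _ ≤ ((∫⁻ a, g a ^ p ∂μ) ^ (1 / p)) ^ p := ENNReal.rpow_le_rpow h hp0.le
    _ = _ := by rw [← ENNReal.rpow_mul, one_div_mul_cancel hp0.ne', ENNReal.rpow_one]

lemma tsum_rpow_le {a : ℤ → ℝ≥0∞} (ha : ∑' k, a k = 1) {p : ℝ} (hp : 1 ≤ p) (g : ℤ → ℝ≥0∞) :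
    (∑' k, a k * g k) ^ p ≤ ∑' k, a k * g k ^ p := by
  have hm : ∀ g : ℤ → ℝ≥0∞, Measurable g := fun g => measurable_from_top
  let μ : Measure ℤ := Measure.count.withDensity a
  have hint : ∀ g : ℤ → ℝ≥0∞, ∫⁻ k, g k ∂μ = ∑' k, a k * g k := by
    intro g
    rw [lintegral_withDensity_eq_lintegral_mul _ (hm a) (hm g), lintegral_count]
    rfl
  have : IsProbabilityMeasure μ := ⟨by
    have := hint 1
    simpa [ha] using this⟩
  have h := lintegral_rpow_le_of_prob μ hp (hm g)
  rwa [hint, hint] at h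

/-- Jensen's inequality for a convex combination of averages over the sets `I k`; the condition
`hc` says that `c k` normalises Lebesgue measure on `I k`. -/
lemma weighted_avg_rpow_le {a c : ℤ → ℝ≥0∞} (ha : ∑' k, a k = 1) {I : ℤ → Set ℝ}
    (hc : ∀ k, c k * volume (I k) = 1) {p : ℝ} (hp : 1 ≤ p) {g : ℤ → ℝ → ℝ≥0∞}
    (hg : ∀ k, Measurable (g k)) :
    (∑' k, a k * (c k * ∫⁻ u in I k, g k u)) ^ p
      ≤ ∑' k, a k * (c k * ∫⁻ u in I k, g k u ^ p) := by
  refine (tsum_rpow_le ha hp _).trans (ENNReal.tsum_le_tsum fun k => ?_)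
  gcongr
  have : IsProbabilityMeasure (c k • (volume.restrict (I k) : Measure ℝ)) := ⟨by
    simpa using hc k⟩
  have h := lintegral_rpow_le_of_prob (c k • (volume.restrict (I k) : Measure ℝ)) hp (hg k)
  simpa only [lintegral_smul_measure, smul_eq_mul] using h

lemma lintegral_comp_affine {w : ℝ} (hw : 0 < w) (b : ℝ) {g : ℝ → ℝ≥0∞} (hg : Measurable g) :
    ∫⁻ x, g (w * x - b) = ENNReal.ofReal (1 / w) * ∫⁻ v, g v := by
  have h1 : ∫⁻ v, g v = ∫⁻ v, g (v - b) := (lintegral_sub_right_eq_self g b).symm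
  rw [h1, ← lintegral_map (f := fun v => g (v - b)) (by fun_prop) (measurable_const_mul w),
    Real.map_volume_mul_left hw.ne', lintegral_smul_measure, abs_of_pos (inv_pos.2 hw)]
  simp

/-! ### Translates and the modulus of smoothness -/

section
variable {f : ℝ → ℝ} {p : ℝ}

lemma memLp_shift_sub (hf : MemLp f (ENNReal.ofReal p)) (s : ℝ) :
    MemLp (fun x => f (x + s) - f x) (ENNReal.ofReal p) :=
  (hf.comp_measurePreserving (measurePreserving_add_right volume s)).sub hf

lemma pNorm_eq_toReal {g : ℝ → ℝ} (hp : 1 ≤ p) (hg : MemLp g (ENNReal.ofReal p)) :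
    pNorm p g = (eLpNorm g (ENNReal.ofReal p)).toReal := by
  have hp0 : 0 < p := by linarith
  rw [hg.eLpNorm_eq_integral_rpow_norm (by simpa using hp0) (by simp),
    ENNReal.toReal_ofReal (by positivity), ENNReal.toReal_ofReal hp0.le]
  simp [pNorm]

lemma eLpNorm_shift_sub_le_two (hp : 1 ≤ p) (hf : MemLp f (ENNReal.ofReal p)) (s : ℝ) :
    eLpNorm (fun x => f (x + s) - f x) (ENNReal.ofReal p) ≤ 2 * eLpNorm f (ENNReal.ofReal p) := by
  have hm := measurePreserving_add_right (volume : Measure ℝ) s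
  have h := eLpNorm_sub_le (hf.comp_measurePreserving hm).1 hf.1
    (ENNReal.one_le_ofReal.2 hp)
  rw [eLpNorm_comp_measurePreserving hf.1 hm, ← two_mul] at h
  exact h

/-- The real supremum defining `omegaP` is a genuine one: it is bounded by `2 ‖f‖_p`. -/
lemma eLpNorm_shift_sub_le_omegaP (hp : 1 ≤ p) (hf : MemLp f (ENNReal.ofReal p)) {s d : ℝ}
    (hs : |s| ≤ d) :
    eLpNorm (fun x => f (x + s) - f x) (ENNReal.ofReal p) ≤ ENNReal.ofReal (omegaP p f d) := by
  have hbdd : BddAbove (range fun s : {s : ℝ // |s| ≤ d} =>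
      pNorm p (fun x => f (x + (s : ℝ)) - f x)) := by
    refine ⟨(2 * eLpNorm f (ENNReal.ofReal p)).toReal, ?_⟩
    rintro _ ⟨s, rfl⟩
    simp only
    rw [pNorm_eq_toReal hp (memLp_shift_sub hf s)]
    exact ENNReal.toReal_mono (ENNReal.mul_ne_top (by simp) hf.2.ne)
      (eLpNorm_shift_sub_le_two hp hf s)
  have h := le_ciSup hbdd ⟨s, hs⟩
  simp only [pNorm_eq_toReal hp (memLp_shift_sub hf s)] at h
  rw [← ENNReal.ofReal_toReal (memLp_shift_sub hf s).2.ne]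
  exact ENNReal.ofReal_le_ofReal h

lemma eLpNorm_shift_nsmul_le (hp : 1 ≤ p) (hf : MemLp f (ENNReal.ofReal p)) (s : ℝ) (n : ℕ) :
    eLpNorm (fun x => f (x + n * s) - f x) (ENNReal.ofReal p)
      ≤ n * eLpNorm (fun x => f (x + s) - f x) (ENNReal.ofReal p) := by
  induction n with
  | zero => simp
  | succ n ih =>
    have hm := measurePreserving_add_right (volume : Measure ℝ) (n * s)
    have h1 := (memLp_shift_sub hf s).comp_measurePreserving hm
    have h := eLpNorm_add_le h1.1 (memLp_shift_sub hf (n * s)).1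
      (ENNReal.one_le_ofReal.2 hp)
    rw [eLpNorm_comp_measurePreserving (memLp_shift_sub hf s).1 hm] at h
    have he : (fun x => f (x + ((n + 1 : ℕ) : ℝ) * s) - f x)
        = (fun x => f (x + s) - f x) ∘ (fun x => x + n * s) + fun x => f (x + n * s) - f x := by
      ext x
      simp only [Pi.add_apply, Function.comp]
      push_cast
      rw [show x + (n + 1) * s = x + n * s + s by ring]
      ring
    rw [he]
    refine h.trans ?_
    push_cast
    rw [add_mul, one_mul, add_comm]
    gcongr

/-- The sublinear growth `ω(λ d) ≤ (1 + λ) ω(d)` of the modulus of smoothness, in the form in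
which it is integrated against the kernel. -/
lemma eLpNorm_shift_le_one_add (hp : 1 ≤ p) (hf : MemLp f (ENNReal.ofReal p)) {d : ℝ}
    (hd : 0 < d) (v : ℝ) :
    eLpNorm (fun x => f (x + v * d) - f x) (ENNReal.ofReal p)
      ≤ ENNReal.ofReal ((1 + |v|) * omegaP p f d) := by
  set n : ℕ := ⌊|v|⌋₊ + 1 with hn
  have hnpos : (0 : ℝ) < n := by positivity
  have hvn : |v| ≤ n := by
    rw [hn]; push_cast; exact (Nat.lt_floor_add_one _).le
  have hnv : (n : ℝ) ≤ 1 + |v| := by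
    rw [hn]; push_cast; linarith [Nat.floor_le (abs_nonneg v)]
  have h := eLpNorm_shift_nsmul_le hp hf (v * d / n) n
  rw [mul_div_cancel₀ _ hnpos.ne'] at h
  have hs : |v * d / n| ≤ d := by
    rw [abs_div, abs_mul, abs_of_pos hd, abs_of_pos hnpos, div_le_iff₀ hnpos, mul_comm d]
    gcongr
  refine h.trans ?_
  rw [ENNReal.ofReal_mul (by positivity)]
  gcongr
  · rw [← ENNReal.ofReal_natCast]
    exact ENNReal.ofReal_le_ofReal hnv
  · exact eLpNorm_shift_sub_le_omegaP hp hf hs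

lemma lintegral_rpow_eq_eLpNorm (hp : 1 ≤ p) (g : ℝ → ℝ) :
    ∫⁻ x, ‖g x‖ₑ ^ p = eLpNorm g (ENNReal.ofReal p) ^ p := by
  have hp0 : 0 < p := by linarith
  rw [eLpNorm_eq_lintegral_rpow_enorm_toReal (by simpa using hp0) (by simp),
    ENNReal.toReal_ofReal hp0.le, ← ENNReal.rpow_mul, one_div_mul_cancel hp0.ne', ENNReal.rpow_one]

end

/-! ### Decomposition of the error -/

section
variable {t : ℤ → ℝ} {δ Δ : ℝ} {L f : ℝ → ℝ} {p w : ℝ}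

/-- Kernel-weighted sum of the averages of `|f (u + (x - t_k / w)) - f u|` over the cells, comparing
`f` on the `k`-th cell with its values on the translated cell starting at `x`. -/
def partA (t : ℤ → ℝ) (L f : ℝ → ℝ) (w x : ℝ) : ℝ≥0∞ :=
  ∑' k : ℤ, ENNReal.ofReal (L (w * x - t k)) * (ENNReal.ofReal (w / (t (k + 1) - t k)) *
    ∫⁻ u in Ioc (t k / w) (t (k + 1) / w), ‖f (u + (w * x - t k) / w) - f u‖ₑ)

/-- Kernel-weighted sum of the averages of `|f (x + y) - f x|`, where `y = u - t_k / w` runs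
through the `k`-th cell translated to the origin. -/
def partB (t : ℤ → ℝ) (L f : ℝ → ℝ) (w x : ℝ) : ℝ≥0∞ :=
  ∑' k : ℤ, ENNReal.ofReal (L (w * x - t k)) * (ENNReal.ofReal (w / (t (k + 1) - t k)) *
    ∫⁻ u in Ioc (t k / w) (t (k + 1) / w), ‖f (x + (u - t k / w)) - f x‖ₑ)

lemma measurable_partA (hL : Measurable L) (hf : Measurable f) : Measurable (partA t L f w) := by
  refine Measurable.tsum fun k => ?_
  refine Measurable.mul (by fun_prop) (Measurable.const_mul ?_ _)
  exact Measurable.lintegral_prod_right'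
    (f := fun z : ℝ × ℝ => ‖f (z.2 + (w * z.1 - t k) / w) - f z.2‖ₑ) (by fun_prop)

lemma measurable_partB (hL : Measurable L) (hf : Measurable f) : Measurable (partB t L f w) := by
  refine Measurable.tsum fun k => ?_
  refine Measurable.mul (by fun_prop) (Measurable.const_mul ?_ _)
  exact Measurable.lintegral_prod_right'
    (f := fun z : ℝ × ℝ => ‖f (z.1 + (z.2 - t k / w)) - f z.1‖ₑ) (by fun_prop)

lemma tsum_ofReal_eq_one (hLnonneg : ∀ x, 0 ≤ L x)
    (hLsum : ∀ u, HasSum (fun k : ℤ => L (u - t k)) 1) (u : ℝ) :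
    ∑' k : ℤ, ENNReal.ofReal (L (u - t k)) = 1 := by
  rw [← ENNReal.ofReal_tsum_of_nonneg (fun k => hLnonneg _) (hLsum u).summable, (hLsum u).tsum_eq,
    ENNReal.ofReal_one]

lemma cell_volume (hδ : 0 < δ) (hgap : ∀ k : ℤ, δ ≤ t (k + 1) - t k) (hw : 0 < w) (k : ℤ) :
    ENNReal.ofReal (w / (t (k + 1) - t k)) * volume (Ioc (t k / w) (t (k + 1) / w)) = 1 := by
  have h := hδ.trans_le (hgap k)
  rw [Real.volume_Ioc, ← ENNReal.ofReal_mul (by positivity), ← ENNReal.ofReal_one]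
  congr 1
  field_simp

/-- The pointwise decomposition: the weights sum to one, so `S*_w f x - f x` is a weighted sum of
cell averages of `f u - f x`, and `f (x + (u - t_k / w))` is inserted between the two values. -/
lemma enorm_SwLin_sub_le (hδ : 0 < δ) (hgap : ∀ k : ℤ, δ ≤ t (k + 1) - t k) (hw : 0 < w)
    (hLnonneg : ∀ x, 0 ≤ L x) (hLsum : ∀ u, HasSum (fun k : ℤ => L (u - t k)) 1)
    (hf : Measurable f) (hfloc : LocallyIntegrable f) (x : ℝ)
    (hconv : Summable (fun k : ℤ => L (w * x - t k) *
      ((w / (t (k + 1) - t k)) * ∫ u in (t k / w)..(t (k + 1) / w), f u))) :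
    ‖SwLin t L f w x - f x‖ₑ ≤ partA t L f w x + partB t L f w x := by
  have hdiff := hconv.hasSum.sub ((hLsum (w * x)).mul_right (f x))
  rw [one_mul] at hdiff
  rw [SwLin, ← hdiff.tsum_eq, partA, partB, ← ENNReal.tsum_add]
  refine enorm_tsum_le_tsum_enorm.trans (ENNReal.tsum_le_tsum fun k => ?_)
  have hk := hδ.trans_le (hgap k)
  have hle : t k / w ≤ t (k + 1) / w := by gcongr; linarith
  have havg : (w / (t (k + 1) - t k)) * (∫ u in (t k / w)..(t (k + 1) / w), f u) - f x
      = (w / (t (k + 1) - t k)) * ∫ u in (t k / w)..(t (k + 1) / w), (f u - f x) := by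
    rw [intervalIntegral.integral_sub (hfloc.integrableOn_isCompact isCompact_uIcc).intervalIntegrable
      intervalIntegrable_const]
    simp only [intervalIntegral.integral_const, smul_eq_mul]
    field_simp
  rw [← mul_sub, havg, enorm_mul, enorm_mul, Real.enorm_of_nonneg (hLnonneg _),
    Real.enorm_of_nonneg (by positivity), ← mul_add, ← mul_add,
    ← lintegral_add_left (by fun_prop), intervalIntegral.integral_of_le hle]
  gcongr
  refine (enorm_integral_le_lintegral_enorm _).trans (lintegral_mono fun u => ?_)
  have hu : u + (w * x - t k) / w = x + (u - t k / w) := by field_simp; ring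
  rw [hu, ← enorm_neg (f (x + (u - t k / w)) - f u)]
  refine le_trans (le_of_eq ?_) (enorm_add_le _ _)
  congr 1
  ring

/-- After Jensen, the substitution `v = w x - t_k` makes the kernel factor independent of `k`, so
the disjoint cells can be summed up to an integral over the whole line. -/
lemma lintegral_partA_rpow_le (hδ : 0 < δ) (hgap : ∀ k : ℤ, δ ≤ t (k + 1) - t k) (hw : 0 < w)
    (hLmeas : Measurable L)
    (hLnonneg : ∀ x, 0 ≤ L x) (hLsum : ∀ u, HasSum (fun k : ℤ => L (u - t k)) 1)
    (hf : Measurable f) (hp : 1 ≤ p) :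
    ∫⁻ x, partA t L f w x ^ p ≤
      ENNReal.ofReal (1 / δ) *
        ∫⁻ v, ENNReal.ofReal (L v) * ∫⁻ u, ‖f (u + v * (1 / w)) - f u‖ₑ ^ p := by
  set I : ℤ → Set ℝ := fun k => Ioc (t k / w) (t (k + 1) / w) with hI
  set G : ℤ → ℝ → ℝ≥0∞ := fun k v =>
    ENNReal.ofReal (L v) * ∫⁻ u in I k, ‖f (u + v * (1 / w)) - f u‖ₑ ^ p with hG
  have hGm : ∀ k, Measurable (G k) := fun k => by
    refine Measurable.mul (by fun_prop) ?_
    exact Measurable.lintegral_prod_right'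
      (f := fun z : ℝ × ℝ => ‖f (z.2 + z.1 * (1 / w)) - f z.2‖ₑ ^ p) (by fun_prop)
  have hmono : Monotone fun k : ℤ => t k / w := by
    refine monotone_int_of_le_succ fun k => ?_
    have := hgap k
    gcongr
    linarith
  have hdisj : Pairwise (Function.onFun Disjoint I) := by
    simpa [hI] using hmono.pairwise_disjoint_on_Ioc_succ
  calc ∫⁻ x, partA t L f w x ^ p
      ≤ ∫⁻ x, ∑' k : ℤ, ENNReal.ofReal (w / (t (k + 1) - t k)) * G k (w * x - t k) := by
        refine lintegral_mono fun x => ?_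
        refine (weighted_avg_rpow_le (tsum_ofReal_eq_one hLnonneg hLsum (w * x))
          (cell_volume hδ hgap hw) hp (fun k => by fun_prop)).trans (le_of_eq ?_)
        refine tsum_congr fun k => ?_
        simp only [hG, mul_one_div]
        ring
    _ = ∑' k : ℤ, ENNReal.ofReal (w / (t (k + 1) - t k)) *
          (ENNReal.ofReal (1 / w) * ∫⁻ v, G k v) := by
        have hGc : ∀ k, Measurable fun x => G k (w * x - t k) :=
          fun k => (hGm k).comp (by fun_prop)
        rw [lintegral_tsum fun k => ((hGc k).const_mul _).aemeasurable]
        refine tsum_congr fun k => ?_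
        rw [lintegral_const_mul _ (hGc k),
          lintegral_comp_affine hw _ (hGm k)]
    _ ≤ ∑' k : ℤ, ENNReal.ofReal (1 / δ) * ∫⁻ v, G k v := by
        refine ENNReal.tsum_le_tsum fun k => ?_
        have hk := hδ.trans_le (hgap k)
        rw [← mul_assoc, ← ENNReal.ofReal_mul (by positivity)]
        gcongr
        rw [show w / (t (k + 1) - t k) * (1 / w) = 1 / (t (k + 1) - t k) by field_simp]
        gcongr
        exact hgap k
    _ = ENNReal.ofReal (1 / δ) * ∫⁻ v, ∑' k, G k v := by
        rw [ENNReal.tsum_mul_left, lintegral_tsum fun k => (hGm k).aemeasurable]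
    _ ≤ _ := by
        gcongr with v
        rw [ENNReal.tsum_mul_left, ← lintegral_iUnion (fun k => measurableSet_Ioc) hdisj]
        gcongr
        exact Measure.restrict_le_self

/-- After Jensen, every translated cell is contained in `(0, Δ / w]`, so the summands are bounded
independently of `k` and the weights sum to one. -/
lemma lintegral_partB_rpow_le (hδ : 0 < δ) (hgap : ∀ k : ℤ, δ ≤ t (k + 1) - t k)
    (hgap' : ∀ k : ℤ, t (k + 1) - t k ≤ Δ) (hw : 0 < w)
    (hLnonneg : ∀ x, 0 ≤ L x) (hLsum : ∀ u, HasSum (fun k : ℤ => L (u - t k)) 1)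
    (hf : Measurable f) (hp : 1 ≤ p) :
    ∫⁻ x, partB t L f w x ^ p ≤
      ENNReal.ofReal (w / δ) * ∫⁻ y in Ioc 0 (Δ / w), ∫⁻ x, ‖f (x + y) - f x‖ₑ ^ p := by
  have hshift : ∀ (k : ℤ) (x : ℝ),
      ∫⁻ u in Ioc (t k / w) (t (k + 1) / w), ‖f (x + (u - t k / w)) - f x‖ₑ ^ p
        ≤ ∫⁻ y in Ioc 0 (Δ / w), ‖f (x + y) - f x‖ₑ ^ p := by
    intro k x
    rw [← lintegral_indicator measurableSet_Ioc, ← lintegral_indicator measurableSet_Ioc,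
      ← lintegral_sub_right_eq_self
        ((Ioc 0 (Δ / w)).indicator fun y => ‖f (x + y) - f x‖ₑ ^ p) (t k / w)]
    refine lintegral_mono fun u => ?_
    by_cases hu : u ∈ Ioc (t k / w) (t (k + 1) / w)
    swap
    · rw [indicator_of_notMem hu]
      exact zero_le
    rw [indicator_of_mem hu, indicator_of_mem]
    refine ⟨by linarith [hu.1], ?_⟩
    have : t (k + 1) / w - t k / w ≤ Δ / w := by
      rw [← sub_div]
      gcongr
      exact hgap' k
    linarith [hu.2]
  calc ∫⁻ x, partB t L f w x ^ p
      ≤ ∫⁻ x, ENNReal.ofReal (w / δ) * ∫⁻ y in Ioc 0 (Δ / w), ‖f (x + y) - f x‖ₑ ^ p := by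
        refine lintegral_mono fun x => ?_
        refine (weighted_avg_rpow_le (tsum_ofReal_eq_one hLnonneg hLsum (w * x))
          (cell_volume hδ hgap hw) hp (fun k => by fun_prop)).trans ?_
        calc _ ≤ ∑' k : ℤ, ENNReal.ofReal (L (w * x - t k)) * (ENNReal.ofReal (w / δ) *
              ∫⁻ y in Ioc 0 (Δ / w), ‖f (x + y) - f x‖ₑ ^ p) := by
              refine ENNReal.tsum_le_tsum fun k => ?_
              have hck : w / (t (k + 1) - t k) ≤ w / δ := by
                gcongr
                exact hgap k
              exact mul_le_mul_right
                (mul_le_mul' (ENNReal.ofReal_le_ofReal hck) (hshift k x)) _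
          _ = _ := by
              rw [ENNReal.tsum_mul_right, tsum_ofReal_eq_one hLnonneg hLsum, one_mul]
    _ = _ := by
        rw [lintegral_const_mul]
        · congr 1
          exact lintegral_lintegral_swap (by fun_prop)
        · exact Measurable.lintegral_prod_right'
            (f := fun z : ℝ × ℝ => ‖f (z.1 + z.2) - f z.1‖ₑ ^ p) (by fun_prop)

lemma lintegral_partA_rpow_le_const (hδ : 0 < δ) (hgap : ∀ k : ℤ, δ ≤ t (k + 1) - t k) (hw : 0 < w)
    (hLmeas : Measurable L)
    (hLnonneg : ∀ x, 0 ≤ L x) (hLsum : ∀ u, HasSum (fun k : ℤ => L (u - t k)) 1)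
    (hL1 : Integrable L) (hMp : Integrable (fun u : ℝ => L u * |u| ^ p))
    (hf : Measurable f) (hp : 1 ≤ p) (hfp : MemLp f (ENNReal.ofReal p)) {K : ℝ} (hK : 0 ≤ K)
    (hω : omegaP p f (1 / w) ≤ K) :
    ∫⁻ x, partA t L f w x ^ p ≤ ENNReal.ofReal
      (1 / δ * (2 ^ (p - 1) * K ^ p * ((∫ u, L u) + ∫ u, L u * |u| ^ p))) := by
  have hp0 : 0 < p := by linarith
  refine (lintegral_partA_rpow_le hδ hgap hw hLmeas hLnonneg hLsum hf hp).trans ?_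
  rw [ENNReal.ofReal_mul (by positivity)]
  gcongr
  have hint : Integrable fun v => 2 ^ (p - 1) * K ^ p * (L v + L v * |v| ^ p) :=
    (hL1.add hMp).const_mul _
  rw [← integral_add hL1 hMp, ← integral_const_mul, ofReal_integral_eq_lintegral_ofReal hint
    (Eventually.of_forall fun v => by have := hLnonneg v; simp only [Pi.zero_apply]; positivity)]
  refine lintegral_mono fun v => ?_
  have hLv := hLnonneg v
  rw [lintegral_rpow_eq_eLpNorm hp]
  have h1 := eLpNorm_shift_le_one_add hp hfp (one_div_pos.2 hw) v
  have h2 : (1 + |v|) * omegaP p f (1 / w) ≤ (1 + |v|) * K := by gcongr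
  have h3 := ENNReal.rpow_le_rpow (h1.trans (ENNReal.ofReal_le_ofReal h2)) hp0.le
  rw [ENNReal.ofReal_rpow_of_nonneg (by positivity) hp0.le] at h3
  calc _ ≤ ENNReal.ofReal (L v) * ENNReal.ofReal (((1 + |v|) * K) ^ p) := by gcongr
    _ = ENNReal.ofReal (L v * ((1 + |v|) * K) ^ p) := (ENNReal.ofReal_mul hLv).symm
    _ ≤ _ := by
      apply ENNReal.ofReal_le_ofReal
      have h4 : (1 + |v|) ^ p ≤ 2 ^ (p - 1) * (1 + |v| ^ p) := by
        have := NNReal.rpow_add_le_mul_rpow_add_rpow 1 ‖v‖₊ hp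
        rw [← NNReal.coe_le_coe] at this
        simpa using this
      rw [Real.mul_rpow (by positivity) hK]
      calc _ ≤ L v * (2 ^ (p - 1) * (1 + |v| ^ p) * K ^ p) := by gcongr
        _ = _ := by ring

lemma lintegral_partB_rpow_le_const (hδ : 0 < δ) (hgap : ∀ k : ℤ, δ ≤ t (k + 1) - t k)
    (hgap' : ∀ k : ℤ, t (k + 1) - t k ≤ Δ) (hw : 0 < w)
    (hLnonneg : ∀ x, 0 ≤ L x) (hLsum : ∀ u, HasSum (fun k : ℤ => L (u - t k)) 1)
    (hf : Measurable f) (hp : 1 ≤ p) (hfp : MemLp f (ENNReal.ofReal p)) {K : ℝ} (hK : 0 ≤ K)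
    (hω : omegaP p f (Δ / w) ≤ K) :
    ∫⁻ x, partB t L f w x ^ p ≤ ENNReal.ofReal (1 / δ * (Δ * K ^ p)) := by
  have hp0 : 0 < p := by linarith
  refine (lintegral_partB_rpow_le hδ hgap hgap' hw hLnonneg hLsum hf hp).trans ?_
  have hb : ∫⁻ y in Ioc 0 (Δ / w), ∫⁻ x, ‖f (x + y) - f x‖ₑ ^ p
      ≤ ∫⁻ y in Ioc 0 (Δ / w), ENNReal.ofReal (K ^ p) := by
    refine setLIntegral_mono' measurableSet_Ioc fun y hy => ?_
    rw [lintegral_rpow_eq_eLpNorm hp, ← ENNReal.ofReal_rpow_of_nonneg hK hp0.le]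
    gcongr
    exact (eLpNorm_shift_sub_le_omegaP hp hfp (by rw [abs_of_pos hy.1]; exact hy.2)).trans
      (ENNReal.ofReal_le_ofReal hω)
  refine (mul_le_mul_right hb _).trans (le_of_eq ?_)
  rw [setLIntegral_const, Real.volume_Ioc, ← ENNReal.ofReal_mul (by positivity),
    ← ENNReal.ofReal_mul (by positivity)]
  congr 1
  field_simp
  ring

/-- Passage from the `ℝ≥0∞`-valued bounds back to `pNorm`; no measurability of `g` is needed since
the Bochner integral vanishes for non-integrable functions. -/
lemma pNorm_le_of_enorm_le_add (hp : 1 ≤ p) {g : ℝ → ℝ} {A B : ℝ → ℝ≥0∞} (hA : Measurable A)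
    (hB : Measurable B) (hg : ∀ x, ‖g x‖ₑ ≤ A x + B x) {a b : ℝ} (ha : 0 ≤ a) (hb : 0 ≤ b)
    (hAa : ∫⁻ x, A x ^ p ≤ ENNReal.ofReal a) (hBb : ∫⁻ x, B x ^ p ≤ ENNReal.ofReal b) :
    pNorm p g ≤ a ^ (1 / p) + b ^ (1 / p) := by
  have hp0 : 0 < p := by linarith
  by_cases hi : Integrable fun x => |g x| ^ p
  · rw [← ENNReal.ofReal_le_ofReal_iff (by positivity), pNorm,
      ← ENNReal.ofReal_rpow_of_nonneg (integral_nonneg fun x => by positivity) (by positivity),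
      ofReal_integral_eq_lintegral_ofReal hi (Eventually.of_forall fun x => by
        simp only [Pi.zero_apply]; positivity),
      ENNReal.ofReal_add (by positivity) (by positivity),
      ← ENNReal.ofReal_rpow_of_nonneg ha (by positivity),
      ← ENNReal.ofReal_rpow_of_nonneg hb (by positivity)]
    calc _ ≤ (∫⁻ x, (A + B) x ^ p) ^ (1 / p) := by
          gcongr with x
          rw [← ENNReal.ofReal_rpow_of_nonneg (abs_nonneg _) hp0.le, ← Real.enorm_eq_ofReal_abs]
          gcongr
          exact hg x
      _ ≤ (∫⁻ x, A x ^ p) ^ (1 / p) + (∫⁻ x, B x ^ p) ^ (1 / p) :=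
          ENNReal.lintegral_Lp_add_le hA.aemeasurable hB.aemeasurable hp
      _ ≤ _ := by gcongr
  · rw [pNorm, integral_undef hi, Real.zero_rpow (by positivity)]
    positivity

lemma m0R_eq_one (hLnonneg : ∀ x, 0 ≤ L x)
    (hLsum : ∀ u, HasSum (fun k : ℤ => L (u - t k)) 1) : m0R t L = 1 := by
  simp [m0R, tsum_ofReal_eq_one hLnonneg hLsum]

end

/-- Corollary: order of approximation in `L^p(ℝ)` for the linear sampling
Kantorovich operators when `f ∈ Lip(α, p)`. -/
theorem lipschitz_order_lp_linear
    (t : ℤ → ℝ) (δ Δ : ℝ) (hδ : 0 < δ) (hδΔ : δ ≤ Δ)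
    (hgap : ∀ k : ℤ, δ ≤ t (k + 1) - t k ∧ t (k + 1) - t k ≤ Δ)
    (htop : Tendsto t atTop atTop) (hbot : Tendsto t atBot atBot)
    (L : ℝ → ℝ)
    (hLmeas : Measurable L) (hLnonneg : ∀ x : ℝ, 0 ≤ L x)
    -- (L1)
    (hL1 : Integrable L)
    (hLbd : ∃ ε > (0 : ℝ), ∃ B : ℝ, ∀ x : ℝ, |x| ≤ ε → L x ≤ B)
    -- (L2)
    (hL2 : ∃ β₀ > (0 : ℝ), dMoment t L β₀ < ⊤)
    -- partition of unity
    (hLsum : ∀ u : ℝ, HasSum (fun k : ℤ => L (u - t k)) 1)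
    -- M_p(L) < +∞
    (p : ℝ) (hp : 1 ≤ p)
    (hMp : Integrable (fun u : ℝ => L u * |u| ^ p))
    -- f ∈ L^p(ℝ)
    (f : ℝ → ℝ) (hfmeas : Measurable f) (hfloc : LocallyIntegrable f)
    (hfp : Integrable (fun x : ℝ => |f x| ^ p))
    -- the series defining `S*_w f` converges everywhere
    (hconv : ∀ w > (0 : ℝ), ∀ x : ℝ, Summable (fun k : ℤ => L (w * x - t k) *
      ((w / (t (k + 1) - t k)) * ∫ u in (t k / w)..(t (k + 1) / w), f u)))
    -- f ∈ Lip(α, p), with Lipschitz constant C₁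
    (α : ℝ) (hα : 0 < α) (hα1 : α ≤ 1) (C₁ : ℝ) (hC₁ : 0 < C₁)
    (hLip : ∃ t₀ > (0 : ℝ), ∀ s : ℝ, 0 < s → s ≤ t₀ → omegaP p f s ≤ C₁ * s ^ α) :
    ∃ W : ℝ, ∀ w ≥ W,
      pNorm p (fun x => SwLin t L f w x - f x) ≤
        δ ^ (-(1 / p)) * (2 * m0R t L) ^ ((p - 1) / p)
            * ((∫ u : ℝ, L u) + ∫ u : ℝ, L u * |u| ^ p) ^ (1 / p)
            * C₁ * (1 / w ^ α)
        + δ ^ (-(1 / p)) * m0R t L * C₁ * Δ ^ (1 / p) * (Δ / w) ^ α := by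
  obtain ⟨t₀, ht₀, hLip⟩ := hLip
  have hp0 : 0 < p := by linarith
  have hΔ : 0 < Δ := hδ.trans_le hδΔ
  have hfp' : MemLp f (ENNReal.ofReal p) := by
    rw [← integrable_norm_rpow_iff hfmeas.aestronglyMeasurable (by simpa using hp0) (by simp),
      ENNReal.toReal_ofReal hp0.le]
    simpa using hfp
  -- For `w` beyond this threshold both steps `1 / w` and `Δ / w` are at most `t₀`.
  refine ⟨max (1 / t₀) (Δ / t₀), fun w hwW => ?_⟩
  have hw1 : 1 / t₀ ≤ w := (le_max_left _ _).trans hwW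
  have hw2 : Δ / t₀ ≤ w := (le_max_right _ _).trans hwW
  have hw : 0 < w := (one_div_pos.2 ht₀).trans_le hw1
  have h1 : omegaP p f (1 / w) ≤ C₁ * (1 / w) ^ α := by
    refine hLip _ (by positivity) ?_
    rw [div_le_iff₀ ht₀] at hw1
    rw [div_le_iff₀ hw]
    linarith
  have h2 : omegaP p f (Δ / w) ≤ C₁ * (Δ / w) ^ α := by
    refine hLip _ (by positivity) ?_
    rw [div_le_iff₀ ht₀] at hw2
    rw [div_le_iff₀ hw]
    linarith
  have hM : 0 ≤ (∫ u : ℝ, L u) + ∫ u : ℝ, L u * |u| ^ p :=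
    add_nonneg (integral_nonneg hLnonneg)
      (integral_nonneg fun u => mul_nonneg (hLnonneg u) (by positivity))
  have hA := lintegral_partA_rpow_le_const hδ (fun k => (hgap k).1) hw hLmeas hLnonneg hLsum
    hL1 hMp hfmeas hp hfp' (by positivity) h1
  have hB := lintegral_partB_rpow_le_const hδ (fun k => (hgap k).1) (fun k => (hgap k).2) hw
    hLnonneg hLsum hfmeas hp hfp' (by positivity) h2
  refine (pNorm_le_of_enorm_le_add hp (measurable_partA hLmeas hfmeas)
    (measurable_partB hLmeas hfmeas) (fun x => enorm_SwLin_sub_le hδ (fun k => (hgap k).1) hw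
      hLnonneg hLsum hfmeas hfloc x (hconv w hw x)) (by positivity) (by positivity)
    hA hB).trans (le_of_eq ?_)
  have hKp : ∀ K : ℝ, 0 ≤ K → (K ^ p) ^ (1 / p) = K := fun K hK => by
    rw [← Real.rpow_mul hK, mul_one_div_cancel hp0.ne', Real.rpow_one]
  have hδp : (1 / δ) ^ (1 / p) = δ ^ (-(1 / p)) := by
    rw [one_div δ, Real.inv_rpow hδ.le, Real.rpow_neg hδ.le]
  have h2p : ((2 : ℝ) ^ (p - 1)) ^ (1 / p) = 2 ^ ((p - 1) / p) := by
    rw [← Real.rpow_mul (by norm_num), mul_one_div]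
  have hwα : (1 / w) ^ α = 1 / w ^ α := by
    rw [Real.div_rpow zero_le_one hw.le, Real.one_rpow]
  rw [m0R_eq_one hLnonneg hLsum, mul_one, mul_one]
  congr 1
  · rw [Real.mul_rpow (by positivity) (by positivity), Real.mul_rpow (by positivity) hM,
      Real.mul_rpow (by positivity) (by positivity), hKp _ (by positivity), hδp, h2p, hwα]
    ring
  · rw [Real.mul_rpow (by positivity) (by positivity),
      Real.mul_rpow (by positivity) (by positivity), hKp _ (by positivity), hδp]
    ring
end
end

section
/- Fix 0 < a < 1/e and for w > 0 define g_w(u) := u^{1−1/w} for u ∈ (a,1) and g_w(u) := u otherwise. Then, for sufficiently large w > 0, sup_{u≠0} |g_w(u)/u − 1| ≤ a^{−1} · ((w−1)/w)^w · 1/(w−1); in particular sup_{u≠0} |g_w(u)/u − 1| = O(w^{−1}) as w → +∞. -/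
/-!
On `(a, 1)` one has `|g_w(u)/u - 1| = (u^{1-1/w} - u)/u`. Over `u > 0` the numerator is maximal at
`c = ((w-1)/w)^w`, with value `c/(w-1)` (`rpow_sub_self_le`). Dividing by `u > a` gives the first
bound, valid for all `w > 1`, and the second follows from `c ≤ 1` and `1/(w-1) ≤ 2/w` for `w ≥ 2`.
-/

open Filter Real

noncomputable section

/-- The family `g_w`: `g_w(u) = u^{1-1/w}` for `u ∈ (a,1)` and `g_w(u) = u` otherwise. -/
def gw (a w u : ℝ) : ℝ := if a < u ∧ u < 1 then u ^ (1 - 1 / w) else u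

/-- Weighted AM-GM for `u` and `c = ((w-1)/w)^w` with weights `1 - 1/w` and `1/w`; since
`c^{1/w} = (w-1)/w = 1 - 1/w`, the weight of `u` cancels. -/
lemma rpow_sub_self_le {w u : ℝ} (hw : 1 < w) (hu : 0 < u) :
    u ^ (1 - 1 / w) - u ≤ ((w - 1) / w) ^ w * (1 / (w - 1)) := by
  have hw0 : 0 < w := by linarith
  have hw1 : 0 < w - 1 := by linarith
  have hq : 0 < (w - 1) / w := div_pos hw1 hw0
  have hs : 1 - 1 / w = (w - 1) / w := by field_simp
  have hc : (((w - 1) / w) ^ w) ^ (1 / w) = (w - 1) / w := by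
    rw [← Real.rpow_mul hq.le, mul_one_div_cancel hw0.ne', Real.rpow_one]
  have h := Real.geom_mean_le_arith_mean2_weighted (w₁ := 1 - 1 / w) (w₂ := 1 / w)
    (by rw [hs]; exact hq.le) (by positivity) hu.le (Real.rpow_nonneg hq.le w) (by ring)
  rw [hc] at h
  generalize ((w - 1) / w) ^ w = c at h ⊢
  generalize u ^ (1 - 1 / w) = v at h ⊢
  rw [hs] at h
  have h2 : v * (w - 1) ≤ (w - 1) * u + c := by
    have h3 := mul_le_mul_of_nonneg_right h hw0.le
    field_simp at h3
    linarith
  rw [mul_one_div, le_div_iff₀ hw1]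
  linarith

lemma abs_gw_div_sub_one_le {a w u : ℝ} (ha0 : 0 < a) (hw : 1 < w) (hu : u ≠ 0) :
    |gw a w u / u - 1| ≤ a⁻¹ * (((w - 1) / w) ^ w * (1 / (w - 1))) := by
  have hw0 : 0 < w := by linarith
  have hw1 : 0 < w - 1 := by linarith
  have hM : 0 ≤ ((w - 1) / w) ^ w * (1 / (w - 1)) := by positivity
  unfold gw
  split_ifs with h
  · obtain ⟨hau, hu1⟩ := h
    have hu0 : 0 < u := ha0.trans hau
    have hge : u ≤ u ^ (1 - 1 / w) := by
      have h1 : 1 - 1 / w ≤ 1 := by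
        have : 0 < 1 / w := by positivity
        linarith
      simpa using Real.rpow_le_rpow_of_exponent_ge hu0 hu1.le h1
    have heq : u ^ (1 - 1 / w) / u - 1 = u⁻¹ * (u ^ (1 - 1 / w) - u) := by field_simp
    rw [heq, abs_of_nonneg (mul_nonneg (inv_nonneg.2 hu0.le) (sub_nonneg.2 hge))]
    exact mul_le_mul (inv_anti₀ ha0 hau.le) (rpow_sub_self_le hw hu0) (sub_nonneg.2 hge)
      (inv_nonneg.2 ha0.le)
  · rw [div_self hu, sub_self, abs_zero]
    exact mul_nonneg (inv_nonneg.2 ha0.le) hM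

/-- For sufficiently large `w`, `sup_{u ≠ 0} |g_w(u)/u - 1| ≤ a⁻¹ ((w-1)/w)^w (w-1)⁻¹`;
in particular `sup_{u ≠ 0} |g_w(u)/u - 1| = O(w⁻¹)` as `w → +∞`. -/
theorem gw_L3_condition (a : ℝ) (ha0 : 0 < a) (ha : a < 1 / Real.exp 1) :
    (∃ W : ℝ, ∀ w ≥ W, ∀ u : ℝ, u ≠ 0 →
      |gw a w u / u - 1| ≤ a⁻¹ * (((w - 1) / w) ^ w * (1 / (w - 1)))) ∧
    (∃ C > (0 : ℝ), ∃ W : ℝ, ∀ w ≥ W, ∀ u : ℝ, u ≠ 0 →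
      |gw a w u / u - 1| ≤ C * w⁻¹) := by
  refine ⟨⟨2, fun w hw u hu => abs_gw_div_sub_one_le ha0 (by linarith) hu⟩,
    2 * a⁻¹, by positivity, 2, fun w hw u hu => ?_⟩
  have hw0 : 0 < w := by linarith
  have hw1 : 0 < w - 1 := by linarith
  refine (abs_gw_div_sub_one_le ha0 (by linarith) hu).trans ?_
  have hc : ((w - 1) / w) ^ w ≤ 1 :=
    Real.rpow_le_one (by positivity) ((div_le_one hw0).2 (by linarith)) hw0.le
  have hd : 1 / (w - 1) ≤ 2 * w⁻¹ := by
    rw [← div_eq_mul_inv, div_le_div_iff₀ hw1 hw0]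
    linarith
  calc a⁻¹ * (((w - 1) / w) ^ w * (1 / (w - 1)))
      ≤ a⁻¹ * (1 * (2 * w⁻¹)) := by gcongr
    _ = 2 * a⁻¹ * w⁻¹ := by ring
end
end
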